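/- For integers n ≥ 1 and k ≥ 2, the independence complex Ind(L^k_n) is l_{n,k}-connected, where l_{n,k} = ⌊(n−1)/(2k−1) − 1⌋. -/

import Mathlib

open SimpleGraph

/-- A claw in `G` on center `u` and leaves `v₁, v₂, v₃`. -/
def SimpleGraph.IsClaw {V : Type*} (G : SimpleGraph V) (u v₁ v₂ v₃ : V) : Prop :=
  v₁ ≠ v₂ ∧ v₁ ≠ v₃ ∧ v₂ ≠ v₃ ∧
  G.Adj u v₁ ∧ G.Adj u v₂ ∧ G.Adj u v₃ ∧
  ¬G.Adj v₁ v₂ ∧ ¬G.Adj v₁ v₃ ∧ ¬G.Adj v₂ v₃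

/-- A graph is claw-free if it has no induced claw. -/
def SimpleGraph.ClawFree {V : Type*} (G : SimpleGraph V) : Prop :=
  ∀ u v₁ v₂ v₃ : V, ¬ G.IsClaw u v₁ v₂ v₃

/-- The closed neighborhood `Ṅ(v) = N(v) ∪ {v}`. -/
def SimpleGraph.closedNbhd {V : Type*} (G : SimpleGraph V) (v : V) : Set V :=
  insert v (G.neighborSet v)

/-- The set of faces of the independence complex `Ind(G)`. -/
def indepFaces {V : Type*} (G : SimpleGraph V) : Set (Finset V) :=
  {s | ∀ a ∈ s, ∀ b ∈ s, ¬ G.Adj a b}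

/-- The geometric realization of an abstract simplicial complex with vertex set `V`. -/
def realization {V : Type*} (K : Set (Finset V)) : Type _ :=
  {f : V → ℝ // (∀ v, 0 ≤ f v) ∧ (∑ᶠ v, f v) = 1 ∧ ∃ s ∈ K, {v | f v ≠ 0} = ↑s}

instance {V : Type*} (K : Set (Finset V)) : TopologicalSpace (realization K) :=
  instTopologicalSpaceSubtype

/-- A space is `n`-connected (`n : ℤ`) if it is nonempty when `n ≥ -1` and every continuous
map from the `i`-sphere extends to the `(i+1)`-ball for all `0 ≤ i ≤ n`. -/
def IsNConnected (n : ℤ) (X : Type*) [TopologicalSpace X] : Prop :=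
  (-1 ≤ n → Nonempty X) ∧
  ∀ i : ℕ, (i : ℤ) ≤ n →
    ∀ f : C(Metric.sphere (0 : EuclideanSpace ℝ (Fin (i + 1))) 1, X),
      ∃ g : C(Metric.closedBall (0 : EuclideanSpace ℝ (Fin (i + 1))) 1, X),
        ∀ x : Metric.sphere (0 : EuclideanSpace ℝ (Fin (i + 1))) 1,
          g ⟨x.1, Metric.sphere_subset_closedBall x.2⟩ = f x

/-- Relation generating the unreduced suspension: glue `X × {0}` to a south pole and
`X × {1}` to a north pole. -/
def SuspRel (X : Type*) : X × unitInterval ⊕ Bool → X × unitInterval ⊕ Bool → Prop :=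
  fun a b => (∃ x, a = Sum.inl (x, 0) ∧ b = Sum.inr false) ∨
    (∃ x, a = Sum.inl (x, 1) ∧ b = Sum.inr true)

/-- The unreduced suspension of a space. -/
def Susp (X : Type*) [TopologicalSpace X] : Type _ := Quot (SuspRel X)

instance (X : Type*) [TopologicalSpace X] : TopologicalSpace (Susp X) :=
  instTopologicalSpaceQuot

/-- The north pole of a suspension. -/
def Susp.north (X : Type*) [TopologicalSpace X] : Susp X := Quot.mk _ (Sum.inr true)

/-- Relation generating the wedge sum of a family of pointed spaces. -/
def WedgeRel {ι : Type*} (X : ι → Type*) (pt : ∀ i, X i) :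
    (Σ i, X i) ⊕ Unit → (Σ i, X i) ⊕ Unit → Prop :=
  fun a b => ∃ i, a = Sum.inl ⟨i, pt i⟩ ∧ b = Sum.inr ()

/-- The wedge sum of a family of pointed spaces. -/
def Wedge {ι : Type*} (X : ι → Type*) [∀ i, TopologicalSpace (X i)] (pt : ∀ i, X i) :
    Type _ :=
  Quot (WedgeRel X pt)

instance {ι : Type*} (X : ι → Type*) [∀ i, TopologicalSpace (X i)] (pt : ∀ i, X i) :
    TopologicalSpace (Wedge X pt) :=
  instTopologicalSpaceQuot

/-- The graph `L^k_n`: vertices `{1, …, n}`, with `i < j` adjacent iff `j - i < k`. -/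
def lineGraphL (n k : ℕ) : SimpleGraph (Fin n) :=
  SimpleGraph.fromRel (fun i j => (i : ℕ) < j ∧ (j : ℕ) - i < k)

/-- The graph `C^k_n`: vertices `{1, …, n}`, with `i < j` adjacent iff `j - i < k` or
`(n + i) - j < k`. -/
def circGraphC (n k : ℕ) : SimpleGraph (Fin n) :=
  SimpleGraph.fromRel (fun i j => (i : ℕ) < j ∧ ((j : ℕ) - i < k ∨ (n + i) - j < k))

/-- One elementary collapse step: remove a free face `σ` together with the unique face
`τ` properly containing it (with `τ` of one dimension higher). -/
def ElemCollapse {V : Type*} (K L : Set (Finset V)) : Prop :=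
  ∃ σ τ : Finset V, σ ∈ K ∧ τ ∈ K ∧ σ ⊂ τ ∧ τ.card = σ.card + 1 ∧
    (∀ ρ ∈ K, σ ⊂ ρ → ρ = τ) ∧ L = K \ {σ, τ}

/-- `K` collapses onto `L` if there is a finite sequence of elementary collapses from
`K` to `L`. -/
def Collapses {V : Type*} (K L : Set (Finset V)) : Prop :=
  Relation.ReflTransGen ElemCollapse K L

/-- Continuous maps from the unit sphere of `E` into `R` extend to the closed unit ball of `E`. -/
def BallExtends (E : Type*) [NormedAddCommGroup E] {T : Type*} [TopologicalSpace T]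
    (R : Set T) : Prop :=
  ∀ f : E → T, ContinuousOn f (Metric.sphere 0 1) → Set.MapsTo f (Metric.sphere 0 1) R →
    ∃ g : E → T, ContinuousOn g (Metric.closedBall 0 1) ∧
      Set.MapsTo g (Metric.closedBall 0 1) R ∧ Set.EqOn g f (Metric.sphere 0 1)

/-- Any two normed spaces of the same finite dimension are related by a homeomorphism which
matches up their closed unit balls and unit spheres. -/
theorem exists_homeomorph_unitBall (E F : Type*) [NormedAddCommGroup E] [NormedSpace ℝ E]
    [FiniteDimensional ℝ E] [NormedAddCommGroup F] [NormedSpace ℝ F] [FiniteDimensional ℝ F]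
    (h : Module.finrank ℝ E = Module.finrank ℝ F) :
    ∃ φ : E ≃ₜ F, (∀ x, φ x ∈ Metric.closedBall (0 : F) 1 ↔ x ∈ Metric.closedBall (0 : E) 1) ∧
      ∀ x, φ x ∈ Metric.sphere (0 : F) 1 ↔ x ∈ Metric.sphere (0 : E) 1 := by
  let e : E ≃L[ℝ] F := ContinuousLinearEquiv.ofFinrankEq h
  let s : Set F := e '' Metric.closedBall 0 1
  have hs : s = e.symm ⁻¹' Metric.closedBall 0 1 := e.image_eq_preimage_symm _
  have hconv : Convex ℝ s := (convex_closedBall (0 : E) 1).linear_image e.toLinearMap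
  have hfr : frontier s = e '' Metric.sphere 0 1 := by
    rw [← frontier_closedBall (0 : E) one_ne_zero]
    exact (e.toHomeomorph.image_frontier _).symm
  have hcl : closure s = e '' Metric.closedBall 0 1 := by
    rw [← (Metric.isClosed_closedBall (x := (0 : E)) (ε := 1)).closure_eq]
    simpa [s] using (e.toHomeomorph.image_closure (Metric.closedBall 0 1)).symm
  have hint : (interior s).Nonempty := by
    have : interior s = e '' Metric.ball 0 1 := by
      rw [← interior_closedBall (0 : E) one_ne_zero]
      exact (e.toHomeomorph.image_interior _).symm
    rw [this]
    exact ⟨e 0, Set.mem_image_of_mem _ (by simp)⟩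
  have hbd : Bornology.IsBounded s :=
    ((isCompact_closedBall (0 : E) 1).image e.continuous).isBounded
  obtain ⟨ψ, -, h1, h2⟩ :=
    exists_homeomorph_image_interior_closure_frontier_eq_unitBall hconv hint hbd
  refine ⟨e.toHomeomorph.trans ψ, fun x => ?_, fun x => ?_⟩
  · rw [← h1, hcl]
    simp
  · rw [← h2, hfr]
    simp

theorem BallExtends.of_finrank_eq {E F T : Type*} [NormedAddCommGroup E] [NormedSpace ℝ E]
    [FiniteDimensional ℝ E] [NormedAddCommGroup F] [NormedSpace ℝ F] [FiniteDimensional ℝ F]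
    [TopologicalSpace T] {R : Set T} (hR : BallExtends E R)
    (h : Module.finrank ℝ E = Module.finrank ℝ F) : BallExtends F R := by
  obtain ⟨φ, h1, h2⟩ := exists_homeomorph_unitBall E F h
  have h1' : Set.MapsTo φ.symm (Metric.closedBall 0 1) (Metric.closedBall 0 1) := fun x hx => by
    rwa [← h1, φ.apply_symm_apply]
  have h2' : Set.MapsTo φ.symm (Metric.sphere 0 1) (Metric.sphere 0 1) := fun x hx => by
    rwa [← h2, φ.apply_symm_apply]
  intro f hf hfR
  obtain ⟨g, hg, hgR, hgf⟩ := hR (f ∘ φ) (hf.comp φ.continuous.continuousOn fun x => (h2 x).2)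
    (hfR.comp fun x => (h2 x).2)
  refine ⟨g ∘ φ.symm, hg.comp φ.symm.continuous.continuousOn h1', hgR.comp h1', fun x hx => ?_⟩
  simpa using hgf (h2' hx)

/-- If `R` is dominated by `Y` through a straight-line homotopy, extension problems in `R` are
solvable as soon as they are solvable in `Y`. -/
theorem BallExtends.of_dominated {E T : Type*} [NormedAddCommGroup E] [NormedSpace ℝ E]
    [NormedAddCommGroup T] [NormedSpace ℝ T] {R Y : Set T} (hY : BallExtends E Y)
    (r s : T → T) (hr : ContinuousOn r R) (hrY : Set.MapsTo r R Y) (hs : ContinuousOn s Y)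
    (H : ∀ x ∈ R, ∀ t : ℝ, 0 ≤ t → t ≤ 1 → (1 - t) • x + t • s (r x) ∈ R)
    (hsR : Set.MapsTo s Y R) : BallExtends E R := by
  intro f hf hfR
  obtain ⟨g, hg, hgY, hgf⟩ := hY (r ∘ f) (hr.comp hf hfR) (hrY.comp hfR)
  let u : E → E := fun x => ‖x‖⁻¹ • x
  let A : Set E := {x | ‖x‖ ≤ 1 / 2}
  let B : Set E := {x | 1 / 2 ≤ ‖x‖ ∧ ‖x‖ ≤ 1}
  have hu : ∀ x : E, x ≠ 0 → u x ∈ Metric.sphere (0 : E) 1 := fun x hx => by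
    simp [u, norm_smul, hx]
  have hB0 : ∀ x ∈ B, x ≠ 0 := by
    rintro x ⟨hx, -⟩ rfl
    norm_num at hx
  have huB : Set.MapsTo u B (Metric.sphere 0 1) := fun x hx => hu x (hB0 x hx)
  have huc : ContinuousOn u B :=
    (continuousOn_id.norm.inv₀ fun x hx => norm_ne_zero_iff.2 (hB0 x hx)).smul continuousOn_id
  have hfu : ContinuousOn (f ∘ u) B := hf.comp huc huB
  have h2A : Set.MapsTo (fun x : E => (2 : ℝ) • x) A (Metric.closedBall 0 1) := fun x hx => by
    have : ‖x‖ ≤ 1 / 2 := hx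
    simp only [mem_closedBall_zero_iff, norm_smul, Real.norm_ofNat]
    linarith
  let p : E → T := fun x => s (g ((2 : ℝ) • x))
  let q : E → T := fun x =>
    (1 - (2 - 2 * ‖x‖)) • f (u x) + (2 - 2 * ‖x‖) • s (r (f (u x)))
  have hp : ContinuousOn p A := hs.comp (hg.comp (by fun_prop) h2A) (hgY.comp h2A)
  have hq : ContinuousOn q B :=
    ((by fun_prop : ContinuousOn (fun x : E => (1 - (2 - 2 * ‖x‖))) B).smul hfu).add
      ((by fun_prop : ContinuousOn (fun x : E => (2 - 2 * ‖x‖)) B).smul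
        (hs.comp (hr.comp hfu (hfR.comp huB)) (hrY.comp (hfR.comp huB))))
  have hpq : ∀ x, ‖x‖ = 1 / 2 → p x = q x := fun x hx => by
    have hx0 : x ≠ 0 := by
      rintro rfl
      norm_num at hx
    have hux : u x = (2 : ℝ) • x := by simp [u, hx]
    have := hgf (hu x hx0)
    simp only [p, q, hx, ← hux, this, Function.comp_apply]
    norm_num
  classical
  let F : E → T := A.piecewise p q
  have hFA : Set.EqOn F p A := Set.piecewise_eqOn _ _ _
  have hFB : Set.EqOn F q B := fun x hx => by
    by_cases hxA : x ∈ A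
    · rw [hFA hxA]
      exact hpq x (le_antisymm hxA hx.1)
    · exact Set.piecewise_eq_of_notMem _ _ _ hxA
  have hAB : Metric.closedBall (0 : E) 1 ⊆ A ∪ B := fun x hx => by
    rw [mem_closedBall_zero_iff] at hx
    rcases le_total ‖x‖ (1 / 2) with h | h
    exacts [Or.inl h, Or.inr ⟨h, hx⟩]
  refine ⟨F, ?_, fun x hx => ?_, fun x hx => ?_⟩
  · refine ((hp.congr hFA).union_of_isClosed (hq.congr hFB)
      (isClosed_le continuous_norm continuous_const) ?_).mono hAB
    exact (isClosed_le continuous_const continuous_norm).inter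
      (isClosed_le continuous_norm continuous_const)
  · rcases hAB hx with h | h
    · rw [hFA h]
      exact hsR (hgY (h2A h))
    · rw [hFB h]
      exact H _ (hfR (huB h)) _ (by linarith [h.2]) (by linarith [h.1])
  · have hx1 : ‖x‖ = 1 := by simpa using hx
    have hxB : x ∈ B := ⟨by rw [hx1]; norm_num, hx1.le⟩
    rw [hFB hxB]
    simp [q, u, hx1]

/-- A map defined on a closed set extends over a finite cell complex, cell by cell. Each cell `c`
is required to land in a prescribed region `R c`. -/
theorem exists_extension_cells {α κ T : Type*} [TopologicalSpace α] [TopologicalSpace T]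
    (cell bd : κ → Set α) (R : κ → Set T) (dim : κ → ℕ) (S : Finset κ) {A : Set α}
    (hA : IsClosed A) (hcell : ∀ c, IsClosed (cell c))
    (hbd : ∀ c ∈ S, ∀ x ∈ bd c, ∃ c' ∈ S, dim c' < dim c ∧ R c' ⊆ R c ∧ x ∈ cell c')
    (hinter : ∀ c ∈ S, ∀ c' ∈ S, c' ≠ c → dim c' ≤ dim c → cell c ∩ cell c' ⊆ bd c)
    (hAc : ∀ c ∈ S, cell c ⊆ A ∨ cell c ∩ A ⊆ bd c)
    (f : α → T) (hf : ContinuousOn f A) (hfR : ∀ c ∈ S, Set.MapsTo f (cell c ∩ A) (R c))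
    (hext : ∀ c ∈ S, ∀ g : α → T, ContinuousOn g (bd c) → Set.MapsTo g (bd c) (R c) →
      ∃ g' : α → T, ContinuousOn g' (cell c) ∧ Set.MapsTo g' (cell c) (R c) ∧
        Set.EqOn g' g (bd c)) :
    ∃ g : α → T, ContinuousOn g (A ∪ ⋃ c ∈ S, cell c) ∧
      (∀ c ∈ S, Set.MapsTo g (cell c) (R c)) ∧ Set.EqOn g f A := by
  classical
  suffices key : ∀ s : Finset κ, s ⊆ S → (∀ x ∈ s, ∀ y ∈ S, dim y < dim x → y ∈ s) →
      ∃ g : α → T, ContinuousOn g (A ∪ ⋃ c ∈ s, cell c) ∧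
        (∀ c ∈ s, Set.MapsTo g (cell c) (R c)) ∧ Set.EqOn g f A from
    key S subset_rfl fun _ _ y hy _ => hy
  intro s
  induction s using Finset.induction_on_max_value dim with
  | empty => exact fun _ _ => ⟨f, by simpa using hf, by simp, fun _ _ => rfl⟩
  | insert a s has hmax ih =>
    intro hsS hlow
    have haS : a ∈ S := hsS (Finset.mem_insert_self a s)
    have hss : s ⊆ S := (Finset.subset_insert a s).trans hsS
    obtain ⟨g, hg, hgR, hgf⟩ := ih hss fun x hx y hy hyx => by
      rcases Finset.mem_insert.1 (hlow x (Finset.mem_insert_of_mem hx) y hy hyx) with rfl | h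
      · exact absurd (hmax x hx) (not_le.2 hyx)
      · exact h
    have hunion : A ∪ ⋃ c ∈ insert a s, cell c = cell a ∪ (A ∪ ⋃ c ∈ s, cell c) := by
      rw [Finset.set_biUnion_insert]
      ac_rfl
    rcases hAc a haS with hsub | hsub
    · refine ⟨g, ?_, fun c hc => ?_, hgf⟩
      · rw [hunion, Set.union_eq_self_of_subset_left (hsub.trans Set.subset_union_left)]
        exact hg
      · rcases Finset.mem_insert.1 hc with rfl | hc
        · intro x hx
          rw [hgf (hsub hx)]
          exact hfR c haS ⟨hx, hsub hx⟩
        · exact hgR c hc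
    have hbds : ∀ x ∈ bd a, ∃ c' ∈ s, R c' ⊆ R a ∧ x ∈ cell c' := fun x hx => by
      obtain ⟨c', hc', hd, hR, hxc⟩ := hbd a haS x hx
      refine ⟨c', ?_, hR, hxc⟩
      rcases Finset.mem_insert.1 (hlow a (Finset.mem_insert_self a s) c' hc' hd) with rfl | h
      · exact absurd hd (lt_irrefl _)
      · exact h
    have hbdY : bd a ⊆ A ∪ ⋃ c ∈ s, cell c := fun x hx => by
      obtain ⟨c', hc', -, hxc⟩ := hbds x hx
      exact Or.inr (Set.mem_biUnion hc' hxc)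
    obtain ⟨g', hg', hgR', hgg'⟩ := hext a haS g (hg.mono hbdY) fun x hx => by
      obtain ⟨c', hc', hR, hxc⟩ := hbds x hx
      exact hR (hgR c' hc' hxc)
    have hYa : ∀ x ∈ A ∪ ⋃ c ∈ s, cell c, x ∈ cell a → x ∈ bd a := by
      rintro x (hx | hx) hxa
      · exact hsub ⟨hxa, hx⟩
      · obtain ⟨c, hc, hxc⟩ := Set.mem_iUnion₂.1 hx
        exact hinter a haS c (hss hc) (fun h => has (h ▸ hc)) (hmax c hc) ⟨hxa, hxc⟩
    have h1 : Set.EqOn ((cell a).piecewise g' g) g' (cell a) := Set.piecewise_eqOn _ _ _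
    have h2 : Set.EqOn ((cell a).piecewise g' g) g (A ∪ ⋃ c ∈ s, cell c) := fun x hx => by
      by_cases hxa : x ∈ cell a
      · rw [h1 hxa, hgg' (hYa x hx hxa)]
      · exact Set.piecewise_eq_of_notMem _ _ _ hxa
    refine ⟨(cell a).piecewise g' g, ?_, fun c hc => ?_, fun x hx => ?_⟩
    · rw [hunion]
      exact (hg'.congr h1).union_of_isClosed (hg.congr h2) (hcell a)
        (hA.union (s.finite_toSet.isClosed_biUnion fun c _ => hcell c))
    · rcases Finset.mem_insert.1 hc with rfl | hc
      · exact fun x hx => (h1 hx).symm ▸ hgR' hx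
      · exact fun x hx => (h2 (Or.inr (Set.mem_biUnion hc hx))).symm ▸ hgR c hc hx
    · rw [h2 (Or.inl hx), hgf hx]

/-- A cell of the cubical grid of mesh `2 / N` on `ι → ℝ`, indexed by its centre `c / N`. It has
length `2 / N` in the directions where `c` is odd and length `0` in the others. -/
def gridCell {ι : Type*} (N : ℤ) (c : ι → ℤ) : Set (ι → ℝ) :=
  {x | ∀ j, |(N : ℝ) * x j - c j| ≤ ((c j % 2 : ℤ) : ℝ)}

/-- The relative boundary of a grid cell. -/
def gridBoundary {ι : Type*} (N : ℤ) (c : ι → ℤ) : Set (ι → ℝ) :=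
  {x | x ∈ gridCell N c ∧ ∃ j, c j % 2 = 1 ∧ |(N : ℝ) * x j - c j| = 1}

/-- The dimension of a grid cell. -/
def gridDim {ι : Type*} [Fintype ι] (c : ι → ℤ) : ℕ :=
  Fintype.card {j // c j % 2 = 1}

theorem isClosed_gridCell {ι : Type*} (N : ℤ) (c : ι → ℤ) : IsClosed (gridCell N c) := by
  simp only [gridCell, Set.ofPred_forall]
  exact isClosed_iInter fun j => isClosed_le (by fun_prop) continuous_const

theorem mem_sphere_pi_iff {ι : Type*} [Fintype ι] {x : ι → ℝ} :
    x ∈ Metric.sphere (0 : ι → ℝ) 1 ↔ (∀ j, |x j| ≤ 1) ∧ ∃ j, |x j| = 1 := by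
  rw [mem_sphere_zero_iff_norm]
  have h1 := pi_norm_le_iff_of_nonneg (x := x) zero_le_one
  have h2 := pi_norm_lt_iff (x := x) one_pos
  simp only [Real.norm_eq_abs] at h1 h2
  constructor
  · intro h
    refine ⟨h1.1 h.le, ?_⟩
    by_contra! hne
    exact (h2.2 fun j => lt_of_le_of_ne (h1.1 h.le j) (hne j)).ne h
  · rintro ⟨h, j, hj⟩
    exact le_antisymm (h1.2 h) (not_lt.1 fun hlt => ((h2.1 hlt) j).ne hj)

theorem mem_closedBall_pi_iff {ι : Type*} [Fintype ι] {x : ι → ℝ} :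
    x ∈ Metric.closedBall (0 : ι → ℝ) 1 ↔ ∀ j, |x j| ≤ 1 := by
  rw [mem_closedBall_zero_iff]
  exact pi_norm_le_iff_of_nonneg zero_le_one

theorem gridCell_extends {ι T : Type*} [Fintype ι] [TopologicalSpace T] {N : ℤ} (hN : 0 < N)
    (c : ι → ℤ) {R : Set T} (hR : BallExtends ({j // c j % 2 = 1} → ℝ) R) (g : (ι → ℝ) → T)
    (hg : ContinuousOn g (gridBoundary N c)) (hgR : Set.MapsTo g (gridBoundary N c) R) :
    ∃ g' : (ι → ℝ) → T, ContinuousOn g' (gridCell N c) ∧ Set.MapsTo g' (gridCell N c) R ∧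
      Set.EqOn g' g (gridBoundary N c) := by
  have hN' : (N : ℝ) ≠ 0 := by exact_mod_cast hN.ne'
  let φ : (ι → ℝ) → ({j // c j % 2 = 1} → ℝ) := fun x j => N * x j - c j
  let ψ : ({j // c j % 2 = 1} → ℝ) → (ι → ℝ) := fun y j =>
    (c j + if h : c j % 2 = 1 then y ⟨j, h⟩ else 0) / N
  have hφ : Continuous φ := by fun_prop
  have hψ : Continuous ψ := by
    refine continuous_pi fun j => ?_
    by_cases h : c j % 2 = 1
    · simp only [ψ, h, dite_true]
      fun_prop
    · simp only [ψ, h, dite_false]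
      fun_prop
  have hψj : ∀ y j, N * ψ y j - c j = if h : c j % 2 = 1 then y ⟨j, h⟩ else 0 := fun y j => by
    simp only [ψ]
    rw [mul_div_cancel₀ _ hN', add_sub_cancel_left]
  have hψb : Set.MapsTo ψ (Metric.sphere 0 1) (gridBoundary N c) := fun y hy => by
    obtain ⟨h1, j, hj⟩ := mem_sphere_pi_iff.1 hy
    refine ⟨fun i => ?_, j, j.2, ?_⟩
    · rw [hψj]
      split_ifs with h
      · simpa [h] using h1 ⟨i, h⟩
      · simp [Int.emod_two_ne_one.1 h]
    · rw [hψj, dif_pos j.2]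
      exact hj
  have hφc : Set.MapsTo φ (gridCell N c) (Metric.closedBall 0 1) := fun x hx => by
    refine mem_closedBall_pi_iff.2 fun j => ?_
    simpa [j.2] using hx j
  have hφb : Set.MapsTo φ (gridBoundary N c) (Metric.sphere 0 1) := fun x hx => by
    obtain ⟨h1, j, hj, hj'⟩ := hx
    exact mem_sphere_pi_iff.2 ⟨mem_closedBall_pi_iff.1 (hφc h1), ⟨j, hj⟩, hj'⟩
  have hψφ : ∀ x ∈ gridCell N c, ψ (φ x) = x := fun x hx => by
    funext j
    have hj := hx j
    simp only [ψ, φ]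
    split_ifs with h
    · field_simp
      ring
    · rw [Int.emod_two_ne_one.1 h, Int.cast_zero, abs_nonpos_iff] at hj
      field_simp
      linarith
  obtain ⟨h, hh, hhR, hhg⟩ := hR (g ∘ ψ) (hg.comp hψ.continuousOn hψb) (hgR.comp hψb)
  refine ⟨h ∘ φ, hh.comp hφ.continuousOn hφc, hhR.comp hφc, fun x hx => ?_⟩
  rw [Function.comp_apply, hhg (hφb hx), Function.comp_apply, hψφ x hx.1]

/-- Every boundary point of a grid cell lies in a cell of smaller dimension, obtained by moving
one odd coordinate of the centre to an adjacent even integer. -/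
theorem exists_face_of_mem_gridBoundary {ι : Type*} [Fintype ι] {N : ℤ} {c : ι → ℤ}
    {x : ι → ℝ} (hx : x ∈ gridBoundary N c) :
    ∃ c' : ι → ℤ, gridDim c' < gridDim c ∧ x ∈ gridCell N c' ∧
      ∀ j, c' j = c j ∨ c j % 2 = 1 ∧ |c' j - c j| = 1 := by
  classical
  obtain ⟨hxc, j, hj, hj'⟩ := hx
  obtain ⟨e, he, hee⟩ : ∃ e : ℤ, (N : ℝ) * x j = e ∧ |e - c j| = 1 := by
    rcases (abs_eq zero_le_one).1 hj' with h | h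
    · exact ⟨c j + 1, by push_cast; linarith, by simp⟩
    · exact ⟨c j - 1, by push_cast; linarith, by simp⟩
  have heven : e % 2 = 0 := by
    rcases (abs_eq zero_le_one).1 hee with h | h <;> omega
  refine ⟨Function.update c j e, ?_, fun i => ?_, fun i => ?_⟩
  · simp only [gridDim, Fintype.card_subtype]
    refine Finset.card_lt_card (Finset.ssubset_iff_of_subset (fun i hi => ?_) |>.2 ⟨j, ?_, ?_⟩)
    · simp only [Finset.mem_filter_univ] at hi ⊢
      by_cases hij : i = j
      · rwa [hij]
      · rwa [Function.update_of_ne hij] at hi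
    · simpa using hj
    · simp [heven]
  · by_cases hij : i = j
    · subst hij
      simp [he, heven]
    · rw [Function.update_of_ne hij]
      exact hxc i
  · by_cases hij : i = j
    · subst hij
      exact Or.inr ⟨hj, by simpa using hee⟩
    · exact Or.inl (Function.update_of_ne hij _ _)

theorem abs_eq_one_of_even_of_odd {y : ℝ} {c e : ℤ} (hc : c % 2 = 1) (he : e % 2 = 0)
    (hy : |y - c| ≤ 1) (hye : y = e) : |y - c| = 1 := by
  subst hye
  have h1 : |e - c| ≤ 1 := by exact_mod_cast hy
  have h2 : |e - c| = 1 := le_antisymm h1 (Int.one_le_abs (by omega))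
  exact_mod_cast h2

theorem gridCell_inter_subset {ι : Type*} [Fintype ι] {N : ℤ} {c c' : ι → ℤ} (hne : c' ≠ c)
    (hdim : gridDim c' ≤ gridDim c) : gridCell N c ∩ gridCell N c' ⊆ gridBoundary N c := by
  rintro x ⟨hx, hx'⟩
  refine ⟨hx, ?_⟩
  obtain ⟨j, hj, hcj⟩ : ∃ j, c' j ≠ c j ∧ c j % 2 = 1 := by
    by_contra! hall
    have hodd : ∀ j, c' j ≠ c j → c' j % 2 = 1 := fun j hj => by
      have h1 := hx j
      have h2 := hx' j
      have h3 : c j % 2 = 0 := Int.emod_two_ne_one.1 (hall j hj)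
      by_contra h4
      rw [h3, Int.cast_zero, abs_nonpos_iff] at h1
      rw [Int.emod_two_ne_one.1 h4, Int.cast_zero, abs_nonpos_iff] at h2
      exact hj (by exact_mod_cast (by linarith : (c' j : ℝ) = c j))
    obtain ⟨i, hi⟩ := Function.ne_iff.1 hne
    refine absurd hdim (not_le.2 ?_)
    simp only [gridDim, Fintype.card_subtype]
    refine Finset.card_lt_card (Finset.ssubset_iff_of_subset (fun j hj => ?_) |>.2 ⟨i, ?_, ?_⟩)
    · simp only [Finset.mem_filter_univ] at hj ⊢
      by_cases h : c' j = c j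
      · rwa [h]
      · exact hodd j h
    · simpa using hodd i hi
    · simpa using hall i hi
  have h1 := hx j
  have h2 := hx' j
  rw [hcj, Int.cast_one] at h1
  refine ⟨j, hcj, ?_⟩
  rcases Int.emod_two_eq_zero_or_one (c' j) with h | h
  · rw [h, Int.cast_zero, abs_nonpos_iff] at h2
    exact abs_eq_one_of_even_of_odd hcj h h1 (by linarith)
  · rw [h, Int.cast_one] at h2
    refine le_antisymm h1 ?_
    have h3 : 2 ≤ |c' j - c j| := by
      rcases lt_or_gt_of_ne hj with h | h
      · rw [abs_of_neg (by omega)]; omega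
      · rw [abs_of_pos (by omega)]; omega
    have h4 : (2 : ℝ) ≤ |(c' j : ℝ) - c j| := by exact_mod_cast h3
    have h5 := abs_sub_le (c' j : ℝ) (N * x j) (c j)
    rw [abs_sub_comm (c' j : ℝ) (N * x j)] at h5
    linarith

theorem exists_gridCell_mem {ι : Type*} {M : ℤ} (x : ι → ℝ)
    (hx : ∀ j, |((2 * M : ℤ) : ℝ) * x j| ≤ ((2 * M : ℤ) : ℝ)) :
    ∃ c : ι → ℤ, (∀ j, |c j| ≤ 2 * M) ∧ x ∈ gridCell (2 * M) c := by
  suffices h : ∀ y : ℝ, |y| ≤ ((2 * M : ℤ) : ℝ) →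
      ∃ c : ℤ, |c| ≤ 2 * M ∧ |y - c| ≤ ((c % 2 : ℤ) : ℝ) by
    choose c hc using fun j => h _ (hx j)
    exact ⟨c, fun j => (hc j).1, fun j => (hc j).2⟩
  intro y hy
  have hm1 := Int.floor_le (y / 2)
  have hm2 := Int.lt_floor_add_one (y / 2)
  set m := ⌊y / 2⌋
  obtain ⟨hy1, hy2⟩ := abs_le.1 hy
  push_cast at hy1 hy2
  by_cases hym : y = 2 * m
  · refine ⟨2 * m, ?_, by simp [hym]⟩
    have : (|2 * m| : ℝ) ≤ 2 * M := by
      rw [← hym]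
      exact_mod_cast hy
    exact_mod_cast this
  · have hlt : (2 * m : ℝ) < y := lt_of_le_of_ne (by linarith) (Ne.symm hym)
    have h1 : m < M := by exact_mod_cast (by linarith : (m : ℝ) < M)
    have h2 : -M < m + 1 := by exact_mod_cast (by push_cast; linarith : ((-M : ℤ) : ℝ) < m + 1)
    refine ⟨2 * m + 1, abs_le.2 ⟨by omega, by omega⟩, ?_⟩
    rw [show (2 * m + 1) % 2 = 1 by omega]
    push_cast
    exact abs_le.2 ⟨by linarith, by linarith⟩

/-- Gluing: if `U` and `V` are relatively open in `U ∪ V`, extension problems in dimension `D`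
in `U ∪ V` reduce to extension problems in dimensions at most `D` in `U` and `V` and extension
problems in dimensions less than `D` in `U ∩ V`. -/
theorem BallExtends.union {T : Type*} [TopologicalSpace T] {U V O P : Set T} (hO : IsOpen O)
    (hP : IsOpen P) (hUO : U = (U ∪ V) ∩ O) (hVP : V = (U ∪ V) ∩ P) {D : ℕ}
    (hU : ∀ d ≤ D, BallExtends (Fin d → ℝ) U) (hV : ∀ d ≤ D, BallExtends (Fin d → ℝ) V)
    (hUV : ∀ d < D, BallExtends (Fin d → ℝ) (U ∩ V)) : BallExtends (Fin D → ℝ) (U ∪ V) := by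
  intro f hf hfR
  have hS : IsCompact (Metric.sphere (0 : Fin D → ℝ) 1) := isCompact_sphere _ _
  obtain ⟨u, hu, hfu⟩ := continuousOn_iff'.1 hf O hO
  obtain ⟨v, hv, hfv⟩ := continuousOn_iff'.1 hf P hP
  have huU : ∀ x ∈ Metric.sphere (0 : Fin D → ℝ) 1, x ∈ u → f x ∈ U := fun x hx hxu => by
    rw [hUO]
    exact ⟨hfR hx, (hfu.symm.subset ⟨hxu, hx⟩).1⟩
  have hvV : ∀ x ∈ Metric.sphere (0 : Fin D → ℝ) 1, x ∈ v → f x ∈ V := fun x hx hxv => by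
    rw [hVP]
    exact ⟨hfR hx, (hfv.symm.subset ⟨hxv, hx⟩).1⟩
  obtain ⟨δ, hδ, hleb⟩ := lebesgue_number_lemma_of_metric (c := fun b : Bool => cond b u v) hS
    (by rintro (_ | _) <;> assumption) (fun x hx => by
      rcases hfR hx with h | h
      · rw [hUO] at h
        exact Set.mem_iUnion.2 ⟨true, (hfu.subset ⟨h.2, hx⟩).1⟩
      · rw [hVP] at h
        exact Set.mem_iUnion.2 ⟨false, (hfv.subset ⟨h.2, hx⟩).1⟩)
  obtain ⟨m, hm⟩ := exists_nat_one_div_lt hδ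
  let M : ℤ := m + 1
  have hM : (0 : ℝ) < M := by simp only [M]; positivity
  have hM' : 0 < M := by exact_mod_cast hM
  have hMδ : 1 / (M : ℝ) < δ := by simpa [M] using hm
  have hN : ((2 * M : ℤ) : ℝ) = 2 * M := by push_cast; ring
  -- each closed cell meets the sphere in a set mapped to `U` or to `V`
  have hsmall : ∀ t : Fin D → ℤ,
      Set.MapsTo f (gridCell (2 * M) t ∩ Metric.sphere 0 1) U ∨
      Set.MapsTo f (gridCell (2 * M) t ∩ Metric.sphere 0 1) V := fun t => by
    by_cases hne : (gridCell (2 * M) t ∩ Metric.sphere 0 1).Nonempty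
    · obtain ⟨x, hxt, hx⟩ := hne
      obtain ⟨b, hb⟩ := hleb x hx
      have hball : ∀ y ∈ gridCell (2 * M) t, y ∈ Metric.ball x δ := fun y hy => by
        refine lt_of_le_of_lt ((dist_pi_le_iff (by positivity)).2 fun j => ?_) hMδ
        have hodd : ((t j % 2 : ℤ) : ℝ) ≤ 1 := by
          exact_mod_cast (by omega : t j % 2 ≤ 1)
        have h1 := abs_le.1 ((hxt j).trans hodd)
        have h2 := abs_le.1 ((hy j).trans hodd)
        rw [hN] at h1 h2
        rw [Real.dist_eq, abs_le, neg_le, le_div_iff₀ hM, le_div_iff₀ hM]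
        constructor <;> linarith
      cases b
      · exact Or.inr fun y hy => hvV y hy.2 (hb (hball y hy.1))
      · exact Or.inl fun y hy => huU y hy.2 (hb (hball y hy.1))
    · rw [Set.not_nonempty_iff_eq_empty] at hne
      simp [hne, Set.mapsTo_empty]
  choose L hLUV hL using fun t : Fin D → ℤ =>
    (show ∃ L : Set T, (L = U ∨ L = V) ∧
        Set.MapsTo f (gridCell (2 * M) t ∩ Metric.sphere 0 1) L by
      rcases hsmall t with h | h
      exacts [⟨U, Or.inl rfl, h⟩, ⟨V, Or.inr rfl, h⟩])
  -- `Top c` is the set of top-dimensional cells containing the cell `c`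
  let Top : (Fin D → ℤ) → Set (Fin D → ℤ) := fun c =>
    {t | ∀ j, t j % 2 = 1 ∧ |c j - t j| ≤ 1}
  let R : (Fin D → ℤ) → Set T := fun c => ⋂ t ∈ Top c, L t
  have hTopne : ∀ c, (Top c).Nonempty := fun c => by
    refine ⟨fun j => if c j % 2 = 1 then c j else c j + 1, fun j => ?_⟩
    dsimp only
    split_ifs with h
    · simp [h]
    · exact ⟨by omega, by simp⟩
  have hTopeq : ∀ c, ∀ t ∈ Top c, ∀ j, c j % 2 = 1 → c j = t j := fun c t ht j hj => by
    obtain ⟨h1, h2⟩ := ht j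
    rw [abs_le] at h2
    omega
  have hTopcell : ∀ c, ∀ t ∈ Top c, gridCell (2 * M) c ⊆ gridCell (2 * M) t := by
    intro c t ht x hx j
    have hxj := hx j
    obtain ⟨h1, h2⟩ := ht j
    rcases Int.emod_two_eq_zero_or_one (c j) with h | h
    · rw [h, Int.cast_zero, abs_nonpos_iff, sub_eq_zero] at hxj
      rw [hxj, h1]
      exact_mod_cast h2
    · rwa [← hTopeq c t ht j h]
  have hRext : ∀ c, BallExtends ({j // c j % 2 = 1} → ℝ) (R c) := fun c => by
    have hcard : gridDim c ≤ D := by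
      simpa [gridDim] using Fintype.card_subtype_le fun j : Fin D => c j % 2 = 1
    have hfin : Module.finrank ℝ (Fin (gridDim c) → ℝ) =
        Module.finrank ℝ ({j // c j % 2 = 1} → ℝ) :=
      (Module.finrank_fin_fun ℝ).trans (Module.finrank_fintype_fun_eq_card ℝ).symm
    by_cases hallU : ∀ t ∈ Top c, L t = U
    · have : R c = U := by
        simp only [R]
        rw [Set.iInter₂_congr hallU, Set.biInter_const (hTopne c)]
      rw [this]
      exact (hU _ hcard).of_finrank_eq hfin
    by_cases hallV : ∀ t ∈ Top c, L t = V
    · have : R c = V := by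
        simp only [R]
        rw [Set.iInter₂_congr hallV, Set.biInter_const (hTopne c)]
      rw [this]
      exact (hV _ hcard).of_finrank_eq hfin
    push Not at hallU hallV
    obtain ⟨t, ht, htU⟩ := hallU
    obtain ⟨t', ht', htV⟩ := hallV
    have hRc : R c = U ∩ V := by
      refine Set.Subset.antisymm (fun y hy => ?_) fun y hy => Set.mem_iInter₂.2 fun s _ => ?_
      · have h1 := Set.mem_iInter₂.1 hy t ht
        have h2 := Set.mem_iInter₂.1 hy t' ht'
        rw [(hLUV t).resolve_left htU] at h1
        rw [(hLUV t').resolve_right htV] at h2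
        exact ⟨h2, h1⟩
      · rcases hLUV s with h | h <;> rw [h]
        exacts [hy.1, hy.2]
    rw [hRc]
    refine (hUV _ (lt_of_le_of_ne hcard fun hD => ?_)).of_finrank_eq hfin
    have hodd : ∀ j, c j % 2 = 1 := fun j => by
      by_contra hj
      have := Fintype.card_subtype_lt (p := fun j : Fin D => c j % 2 = 1) hj
      rw [Fintype.card_fin] at this
      exact this.ne hD
    have htt : t = t' := funext fun j =>
      (hTopeq c t ht j (hodd j)).symm.trans (hTopeq c t' ht' j (hodd j))
    rcases hLUV t with h | h
    · exact htU h
    · exact htV (htt ▸ h)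
  let S : Finset (Fin D → ℤ) := Fintype.piFinset fun _ => Finset.Icc (-(2 * M)) (2 * M)
  have hS : ∀ c, c ∈ S ↔ ∀ j, |c j| ≤ 2 * M := fun c => by
    simp [S, abs_le]
  have hface : ∀ c ∈ S, ∀ x ∈ gridBoundary (2 * M) c,
      ∃ c' ∈ S, gridDim c' < gridDim c ∧ R c' ⊆ R c ∧ x ∈ gridCell (2 * M) c' := by
    intro c hc x hx
    obtain ⟨c', hdim, hxc', hcc'⟩ := exists_face_of_mem_gridBoundary hx
    refine ⟨c', (hS c').2 fun j => ?_, hdim, fun y hy => ?_, hxc'⟩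
    · have hcj := abs_le.1 ((hS c).1 hc j)
      rcases hcc' j with h | ⟨h, h'⟩
      · rw [h]
        exact abs_le.2 hcj
      · rw [abs_eq zero_le_one] at h'
        exact abs_le.2 ⟨by omega, by omega⟩
    · refine Set.mem_iInter₂.2 fun t ht => Set.mem_iInter₂.1 hy t fun j => ⟨(ht j).1, ?_⟩
      rcases hcc' j with h | ⟨h, h'⟩
      · rw [h]
        exact (ht j).2
      · rw [← hTopeq c t ht j h]
        exact h'.le
  have hsphere : ∀ c ∈ S, gridCell (2 * M) c ⊆ Metric.sphere 0 1 ∨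
      gridCell (2 * M) c ∩ Metric.sphere 0 1 ⊆ gridBoundary (2 * M) c := by
    intro c hc
    by_cases hbd : ∃ j, |c j| = 2 * M
    · left
      obtain ⟨j, hj⟩ := hbd
      intro x hx
      refine mem_sphere_pi_iff.2 ⟨fun i => ?_, j, ?_⟩
      · have hci := (hS c).1 hc i
        rcases Int.emod_two_eq_zero_or_one (c i) with h | h
        all_goals have hxi := hx i
        · rw [h, Int.cast_zero, abs_nonpos_iff, sub_eq_zero] at hxi
          have : |((2 * M : ℤ) : ℝ) * x i| ≤ ((2 * M : ℤ) : ℝ) := by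
            rw [hxi]
            exact_mod_cast hci
          rw [abs_mul, hN, abs_of_pos (by linarith)] at this
          nlinarith
        · rw [h, Int.cast_one] at hxi
          obtain ⟨h1, h2⟩ := abs_le.1 hci
          have h3 : c i + 1 ≤ 2 * M := by omega
          have h4 : -(2 * M) ≤ c i - 1 := by omega
          have h3' : (c i : ℝ) + 1 ≤ 2 * M := by exact_mod_cast h3
          have h4' : -(2 * M : ℝ) ≤ c i - 1 := by exact_mod_cast h4
          rw [hN] at hxi
          obtain ⟨h5, h6⟩ := abs_le.1 hxi
          exact abs_le.2 ⟨by nlinarith, by nlinarith⟩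
      · have hxj := hx j
        have hev : c j % 2 = 0 := by
          rcases (abs_eq (by omega)).1 hj with h | h <;> omega
        rw [hev, Int.cast_zero, abs_nonpos_iff, sub_eq_zero] at hxj
        have : |((2 * M : ℤ) : ℝ) * x j| = ((2 * M : ℤ) : ℝ) := by
          rw [hxj]
          exact_mod_cast hj
        rw [abs_mul, hN, abs_of_pos (by linarith)] at this
        exact mul_left_cancel₀ (by linarith : (2 * M : ℝ) ≠ 0) (by linarith)
    · right
      rintro x ⟨hxc, hx⟩
      obtain ⟨-, j, hj⟩ := mem_sphere_pi_iff.1 hx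
      obtain ⟨e, he, he2, hee⟩ : ∃ e : ℤ, ((2 * M : ℤ) : ℝ) * x j = e ∧ e % 2 = 0 ∧
          |e| = 2 * M := by
        rcases (abs_eq zero_le_one).1 hj with h | h
        · exact ⟨2 * M, by rw [h, mul_one], by omega, abs_of_pos (by omega)⟩
        · exact ⟨-(2 * M), by rw [h]; push_cast; ring, by omega, by
            rw [abs_neg, abs_of_pos (by omega)]⟩
      have hxj := hxc j
      rcases Int.emod_two_eq_zero_or_one (c j) with h | h
      · rw [h, Int.cast_zero, abs_nonpos_iff, sub_eq_zero, he] at hxj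
        exact absurd ⟨j, by rw [← Int.cast_injective hxj, hee]⟩ hbd
      · rw [h, Int.cast_one] at hxj
        exact ⟨hxc, j, h, abs_eq_one_of_even_of_odd h he2 hxj he⟩
  obtain ⟨g, hg, hgR, hgf⟩ := exists_extension_cells (gridCell (2 * M)) (gridBoundary (2 * M)) R
    gridDim S (Metric.isClosed_sphere (x := (0 : Fin D → ℝ)) (ε := 1))
    (isClosed_gridCell _) hface
    (fun c _ c' _ hne hdim => gridCell_inter_subset hne hdim) hsphere f hf
    (fun c _ x hx => Set.mem_iInter₂.2 fun t ht => hL t ⟨hTopcell c t ht hx.1, hx.2⟩)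
    (fun c _ g hg hgR => gridCell_extends (by omega) c (hRext c) g hg hgR)
  have hcover : ∀ x ∈ Metric.closedBall (0 : Fin D → ℝ) 1,
      ∃ c ∈ S, x ∈ gridCell (2 * M) c := fun x hx => by
    obtain ⟨c, hc, hxc⟩ := exists_gridCell_mem (M := M) x fun j => by
      rw [abs_mul, hN, abs_of_pos (by linarith)]
      exact mul_le_of_le_one_right (by linarith) (mem_closedBall_pi_iff.1 hx j)
    exact ⟨c, (hS c).2 hc, hxc⟩
  refine ⟨g, hg.mono fun x hx => ?_, fun x hx => ?_, hgf⟩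
  · obtain ⟨c, hc, hxc⟩ := hcover x hx
    exact Or.inr (Set.mem_biUnion hc hxc)
  · obtain ⟨c, hc, hxc⟩ := hcover x hx
    obtain ⟨t, ht⟩ := hTopne c
    have := Set.mem_iInter₂.1 (hgR c hc hxc) t ht
    rcases hLUV t with h | h <;> rw [h] at this
    exacts [Or.inl this, Or.inr this]

theorem ballExtends_singleton (E : Type*) [NormedAddCommGroup E] {T : Type*} [TopologicalSpace T]
    (p : T) : BallExtends E {p} := fun _ _ hfR =>
  ⟨fun _ => p, continuousOn_const, fun _ _ => rfl, fun _ hx => (hfR hx).symm⟩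

/-- The geometric realization of the independence complex of the subgraph of `G` induced on `W`,
as a subset of the standard simplex on all vertices of `G`. -/
def indepSimplices {V : Type*} [Fintype V] (G : SimpleGraph V) (W : Set V) : Set (V → ℝ) :=
  {x | x ∈ stdSimplex ℝ V ∧ (∀ v, x v ≠ 0 → v ∈ W) ∧
    ∀ u v, x u ≠ 0 → x v ≠ 0 → ¬ G.Adj u v}

theorem segment_ne_zero {V : Type*} {x y : V → ℝ} {t : ℝ} {v : V}
    (h : ((1 - t) • x + t • y) v ≠ 0) : x v ≠ 0 ∨ y v ≠ 0 := by
  contrapose! h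
  simp [h.1, h.2]

theorem segment_mem_stdSimplex {V : Type*} [Fintype V] {x y : V → ℝ} (hx : x ∈ stdSimplex ℝ V)
    (hy : y ∈ stdSimplex ℝ V) {t : ℝ} (h0 : 0 ≤ t) (h1 : t ≤ 1) :
    (1 - t) • x + t • y ∈ stdSimplex ℝ V :=
  convex_stdSimplex ℝ V hx hy (by linarith) h0 (by ring)

theorem segment_mem_indepSimplices {V : Type*} [Fintype V] {G : SimpleGraph V} {W : Set V}
    {x y : V → ℝ} (hx : x ∈ indepSimplices G W) (hy : y ∈ stdSimplex ℝ V)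
    (hyx : ∀ v, y v ≠ 0 → x v ≠ 0) {t : ℝ} (h0 : 0 ≤ t) (h1 : t ≤ 1) :
    (1 - t) • x + t • y ∈ indepSimplices G W := by
  have key : ∀ v, ((1 - t) • x + t • y) v ≠ 0 → x v ≠ 0 := fun v hv =>
    (segment_ne_zero hv).elim id (hyx v)
  exact ⟨segment_mem_stdSimplex hx.1 hy h0 h1, fun v hv => hx.2.1 v (key v hv),
    fun u v hu hv => hx.2.2 u v (key u hu) (key v hv)⟩

/-- The independence complex is a cone if there is an isolated vertex. -/
theorem BallExtends.indepSimplices_of_isolated {V : Type*} [Fintype V] {G : SimpleGraph V}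
    {W : Set V} {a : V} (ha : a ∈ W) (hadj : ∀ w ∈ W, ¬ G.Adj a w) (E : Type*)
    [NormedAddCommGroup E] [NormedSpace ℝ E] : BallExtends E (indepSimplices G W) := by
  classical
  have hs : ∀ v, (Pi.single a 1 : V → ℝ) v ≠ 0 → v = a := fun v hv => by
    by_contra h
    exact hv (Pi.single_eq_of_ne h _)
  refine (ballExtends_singleton E (Pi.single a (1 : ℝ) : V → ℝ)).of_dominated
    (fun _ => Pi.single a 1) (fun _ => Pi.single a 1) continuousOn_const (fun _ _ => rfl)
    continuousOn_const (fun x hx t h0 h1 => ?_) (fun _ _ => ?_)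
  · refine ⟨segment_mem_stdSimplex hx.1 (single_mem_stdSimplex ℝ a) h0 h1, fun v hv => ?_,
      fun u v hu hv => ?_⟩
    · rcases segment_ne_zero hv with h | h
      · exact hx.2.1 v h
      · exact hs v h ▸ ha
    · rcases segment_ne_zero hu with hu | hu <;> rcases segment_ne_zero hv with hv | hv
      · exact hx.2.2 u v hu hv
      · rw [hs v hv]
        exact fun h => hadj u (hx.2.1 u hu) h.symm
      · rw [hs u hu]
        exact hadj v (hx.2.1 v hv)
      · rw [hs u hu, hs v hv]
        exact G.loopless.irrefl a
  · refine ⟨single_mem_stdSimplex ℝ a, fun v hv => hs v hv ▸ ha, fun u v hu hv => ?_⟩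
    rw [hs u hu, hs v hv]
    exact G.loopless.irrefl a

open Classical in
/-- The projection of the standard simplex away from the vertex `v` to the opposite facet. -/
noncomputable def eraseVertex {V : Type*} (v : V) (x : V → ℝ) : V → ℝ :=
  (1 - x v)⁻¹ • Function.update x v 0

theorem eraseVertex_self {V : Type*} (v : V) (x : V → ℝ) : eraseVertex v x v = 0 := by
  simp [eraseVertex]

theorem eraseVertex_ne_zero {V : Type*} {v w : V} {x : V → ℝ} (h : eraseVertex v x w ≠ 0) :
    w ≠ v ∧ x w ≠ 0 := by
  have hwv : w ≠ v := by
    rintro rfl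
    exact h (eraseVertex_self w x)
  refine ⟨hwv, fun h0 => h ?_⟩
  simp [eraseVertex, hwv, h0]

theorem eraseVertex_mem_stdSimplex {V : Type*} [Fintype V] {v : V} {x : V → ℝ}
    (hx : x ∈ stdSimplex ℝ V) (hv : x v < 1) : eraseVertex v x ∈ stdSimplex ℝ V := by
  classical
  refine ⟨fun w => ?_, ?_⟩
  · by_cases h : w = v
    · rw [h, eraseVertex_self]
    · have h1 : 0 ≤ 1 - x v := by linarith
      have h2 := hx.1 w
      simp only [eraseVertex, Pi.smul_apply, Function.update_of_ne h, smul_eq_mul]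
      positivity
  · have h1 : ∑ w, Function.update x v 0 w = 1 - x v := by
      rw [Finset.sum_update_of_mem (Finset.mem_univ v), ← hx.2, zero_add,
        ← Finset.sum_sdiff (Finset.subset_univ {v}), Finset.sum_singleton, add_sub_cancel_right]
    have h2 : 1 - x v ≠ 0 := by linarith
    simp only [eraseVertex, Pi.smul_apply, smul_eq_mul, ← Finset.mul_sum]
    convert inv_mul_cancel₀ h2

theorem continuousOn_eraseVertex {V : Type*} (v : V) :
    ContinuousOn (eraseVertex v) {x : V → ℝ | x v < 1} := by
  classical
  have h1 : ContinuousOn (fun x : V → ℝ => 1 - x v) {x | x v < 1} := by fun_prop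
  refine (h1.inv₀ fun x hx => ?_).smul ?_
  · exact (sub_pos.2 hx).ne'
  · exact (continuous_id.update v continuous_const).continuousOn

/-- Extension problems in the independence complex on `W` reduce to extension problems in the
deletion and, one dimension lower, in the link of a vertex `v`. -/
theorem BallExtends.indepSimplices_of_deletion_link {V : Type*} [Fintype V] {G : SimpleGraph V}
    {W : Set V} {v : V} (hv : v ∈ W) {D : ℕ}
    (hdel : ∀ d ≤ D, BallExtends (Fin d → ℝ) (indepSimplices G (W \ {v})))
    (hlink : ∀ d < D, BallExtends (Fin d → ℝ) (indepSimplices G (W \ G.closedNbhd v))) :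
    BallExtends (Fin D → ℝ) (indepSimplices G W) := by
  classical
  have hs : ∀ w, (Pi.single v 1 : V → ℝ) w ≠ 0 → w = v := fun w hw => by
    by_contra h
    exact hw (Pi.single_eq_of_ne h _)
  let U : Set (V → ℝ) := {x | x ∈ indepSimplices G W ∧ x v < 1}
  let U' : Set (V → ℝ) := {x | x ∈ indepSimplices G W ∧ 0 < x v}
  have hunion : U ∪ U' = indepSimplices G W := by
    ext x
    simp only [U, U', Set.mem_union, Set.mem_ofPred_eq, ← and_or_left, and_iff_left_iff_imp]
    intro _
    rcases lt_or_ge (x v) 1 with h | h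
    exacts [Or.inl h, Or.inr (by linarith)]
  have hcont : Continuous fun x : V → ℝ => x v := continuous_apply v
  rw [← hunion]
  refine BallExtends.union (isOpen_Iio.preimage hcont : IsOpen {x : V → ℝ | x v < 1})
    (isOpen_Ioi.preimage hcont : IsOpen {x : V → ℝ | 0 < x v})
    (by rw [hunion]; rfl) (by rw [hunion]; rfl) (fun d hd => ?_) (fun d _ => ?_) fun d hd => ?_
  · refine (hdel d hd).of_dominated (eraseVertex v) id
      ((continuousOn_eraseVertex v).mono fun x hx => hx.2) (fun x hx => ?_) continuousOn_id
      (fun x hx t h0 h1 => ⟨?_, ?_⟩) (fun x hx => ⟨⟨hx.1, fun w hw => (hx.2.1 w hw).1, hx.2.2⟩, ?_⟩)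
    · refine ⟨eraseVertex_mem_stdSimplex hx.1.1 hx.2, fun w hw => ?_, fun u w hu hw => ?_⟩
      · exact ⟨hx.1.2.1 w (eraseVertex_ne_zero hw).2, (eraseVertex_ne_zero hw).1⟩
      · exact hx.1.2.2 u w (eraseVertex_ne_zero hu).2 (eraseVertex_ne_zero hw).2
    · exact segment_mem_indepSimplices hx.1 (eraseVertex_mem_stdSimplex hx.1.1 hx.2)
        (fun w hw => (eraseVertex_ne_zero hw).2) h0 h1
    · have h2 := hx.1.1.1 v
      have h3 := hx.2
      simp only [Pi.add_apply, Pi.smul_apply, id_eq, eraseVertex_self, smul_eq_mul]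
      nlinarith
    · have : x v = 0 := by
        by_contra h
        exact (hx.2.1 v h).2 rfl
      rw [id_eq, this]
      exact one_pos
  · refine (ballExtends_singleton _ (Pi.single v (1 : ℝ) : V → ℝ)).of_dominated
      (fun _ => Pi.single v 1) (fun _ => Pi.single v 1) continuousOn_const (fun _ _ => rfl)
      continuousOn_const (fun x hx t h0 h1 => ⟨?_, ?_⟩) (fun _ _ => ⟨⟨?_, ?_, ?_⟩, ?_⟩)
    · exact segment_mem_indepSimplices hx.1 (single_mem_stdSimplex ℝ v)
        (fun w hw => hs w hw ▸ hx.2.ne') h0 h1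
    · have h2 := hx.2
      simp only [Pi.add_apply, Pi.smul_apply, Pi.single_eq_same, smul_eq_mul]
      rcases h0.eq_or_lt with rfl | h0
      · linarith
      · nlinarith
    · exact single_mem_stdSimplex ℝ v
    · exact fun w hw => hs w hw ▸ hv
    · intro u w hu hw
      rw [hs u hu, hs w hw]
      exact G.loopless.irrefl v
    · simp
  · let s : (V → ℝ) → V → ℝ := fun y =>
      (1 - (1 / 2 : ℝ)) • y + (1 / 2 : ℝ) • (Pi.single v 1 : V → ℝ)
    have hss : ∀ y ∈ stdSimplex ℝ V, s y ∈ stdSimplex ℝ V := fun y hy =>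
      segment_mem_stdSimplex hy (single_mem_stdSimplex ℝ v) (by norm_num) (by norm_num)
    have hsn : ∀ y w, s y w ≠ 0 → y w ≠ 0 ∨ w = v := fun y w hw =>
      (segment_ne_zero hw).imp_right (hs w)
    have hsv : ∀ y : V → ℝ, y v = 0 → s y v = 1 / 2 := fun y hy => by simp [s, hy]
    refine (hlink d hd).of_dominated (eraseVertex v) s
      ((continuousOn_eraseVertex v).mono fun x hx => hx.1.2) (fun x hx => ?_)
      (by fun_prop) (fun x hx t h0 h1 => ?_) fun y hy => ?_
    · refine ⟨eraseVertex_mem_stdSimplex hx.1.1.1 hx.1.2, fun w hw => ⟨?_, ?_⟩,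
        fun u w hu hw => ?_⟩
      · exact hx.1.1.2.1 w (eraseVertex_ne_zero hw).2
      · rintro (h | h)
        · exact (eraseVertex_ne_zero hw).1 h
        · exact hx.1.1.2.2 v w hx.2.2.ne' (eraseVertex_ne_zero hw).2 h
      · exact hx.1.1.2.2 u w (eraseVertex_ne_zero hu).2 (eraseVertex_ne_zero hw).2
    · have hmem : (1 - t) • x + t • s (eraseVertex v x) ∈ indepSimplices G W := by
        refine segment_mem_indepSimplices hx.1.1
          (hss _ (eraseVertex_mem_stdSimplex hx.1.1.1 hx.1.2)) (fun w hw => ?_) h0 h1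
        rcases hsn _ w hw with h | rfl
        exacts [(eraseVertex_ne_zero h).2, hx.2.2.ne']
      have hval : ((1 - t) • x + t • s (eraseVertex v x)) v = (1 - t) * x v + t * (1 / 2) := by
        rw [Pi.add_apply, Pi.smul_apply, Pi.smul_apply, hsv _ (eraseVertex_self v x)]
        rfl
      have h2 := hx.1.2
      have h3 := hx.2.2
      refine ⟨⟨hmem, ?_⟩, ⟨hmem, ?_⟩⟩
      · rw [hval]
        nlinarith
      · rw [hval]
        rcases h0.eq_or_lt with rfl | h0
        · linarith
        · nlinarith
    · have hyv : y v = 0 := by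
        by_contra h
        exact (hy.2.1 v h).2 (Set.mem_insert v _)
      have hadj : ∀ w, y w ≠ 0 → ¬ G.Adj v w := fun w hw h =>
        (hy.2.1 w hw).2 (Set.mem_insert_of_mem v h)
      have hmem : s y ∈ indepSimplices G W := by
        refine ⟨hss y hy.1, fun w hw => ?_, fun u w hu hw => ?_⟩
        · rcases hsn y w hw with h | rfl
          exacts [(hy.2.1 w h).1, hv]
        · rcases hsn y u hu with hyu | hyu <;> rcases hsn y w hw with hyw | hyw
          · exact hy.2.2 u w hyu hyw
          · exact fun h => hadj u hyu (hyw ▸ h.symm)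
          · exact hyu ▸ hadj w hyw
          · rw [hyu, hyw]
            exact G.loopless.irrefl v
      refine ⟨⟨hmem, ?_⟩, ⟨hmem, ?_⟩⟩ <;> rw [hsv y hyv] <;> norm_num

theorem lineGraphL_adj_iff {n k : ℕ} {i j : Fin n} :
    (lineGraphL n k).Adj i j ↔ i ≠ j ∧ (i : ℕ) < j + k ∧ (j : ℕ) < i + k := by
  simp only [lineGraphL, SimpleGraph.fromRel_adj, ne_eq, and_congr_right_iff, Fin.ext_iff]
  intro h
  omega

/-- The final segments of `L^k_n` with more than `D * (2 * k - 1)` vertices have solvable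
extension problems in dimension `D`. -/
theorem ballExtends_indepSimplices_lineGraphL {n k : ℕ} (hk : 1 ≤ k) (D a : ℕ)
    (h : a + D * (2 * k - 1) + 1 ≤ n) :
    BallExtends (Fin D → ℝ) (indepSimplices (lineGraphL n k) {j | a ≤ (j : ℕ)}) := by
  induction D using Nat.strong_induction_on generalizing a with
  | _ D ih =>
    have key : ∀ r, r + 1 ≤ k → ∀ d ≤ D, BallExtends (Fin d → ℝ)
        (indepSimplices (lineGraphL n k)
          {j | a ≤ (j : ℕ) ∧ ((j : ℕ) < a + (r + 1) ∨ a + k ≤ j)}) := by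
      intro r
      induction r with
      | zero =>
        intro _ d _
        refine BallExtends.indepSimplices_of_isolated (a := ⟨a, by omega⟩) ?_ (fun w hw => ?_) _
        · simp
        · simp only [lineGraphL_adj_iff, Set.mem_ofPred_eq, ne_eq, Fin.ext_iff] at hw ⊢
          omega
      | succ r ihr =>
        intro hr d hd
        have hDk : 1 ≤ d → 2 * k - 1 ≤ D * (2 * k - 1) := fun hd1 =>
          Nat.le_mul_of_pos_left _ (by omega)
        rcases Nat.lt_or_ge (a + (r + 1)) n with hlt | hge
        · refine BallExtends.indepSimplices_of_deletion_link (v := ⟨a + (r + 1), hlt⟩) ?_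
            (fun d' hd' => ?_) (fun d' hd' => ?_)
          · simp only [Set.mem_ofPred_eq]
            omega
          · convert ihr (by omega) d' (hd'.trans hd) using 2
            ext j
            simp only [Set.mem_sdiff, Set.mem_ofPred_eq, Set.mem_singleton_iff, Fin.ext_iff]
            omega
          · have hmul : (d' + 1) * (2 * k - 1) ≤ D * (2 * k - 1) :=
              Nat.mul_le_mul_right _ (by omega)
            rw [Nat.succ_mul] at hmul
            convert ih d' (by omega) (a + (r + 1) + k) (by omega) using 2
            ext j
            simp only [Set.mem_sdiff, Set.mem_ofPred_eq, SimpleGraph.closedNbhd, Set.mem_insert_iff,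
              SimpleGraph.mem_neighborSet, lineGraphL_adj_iff, ne_eq, Fin.ext_iff]
            omega
        · convert ihr (by omega) d hd using 2
          ext j
          have := j.2
          simp only [Set.mem_ofPred_eq]
          omega
    convert key (k - 1) (by omega) D le_rfl using 2
    ext j
    simp only [Set.mem_ofPred_eq]
    omega

theorem mem_indepSimplices_univ_iff {V : Type*} [Fintype V] {G : SimpleGraph V} {x : V → ℝ} :
    x ∈ indepSimplices G Set.univ ↔ (∀ v, 0 ≤ x v) ∧ (∑ᶠ v, x v) = 1 ∧
      ∃ s ∈ indepFaces G, {v | x v ≠ 0} = ↑s := by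
  classical
  rw [finsum_eq_sum_of_fintype]
  constructor
  · rintro ⟨⟨h1, h2⟩, -, h3⟩
    exact ⟨h1, h2, Finset.univ.filter fun v => x v ≠ 0,
      fun u hu v hv => h3 u v (by simpa using hu) (by simpa using hv), by simp⟩
  · rintro ⟨h1, h2, s, hs, hxs⟩
    exact ⟨⟨h1, h2⟩, fun _ _ => Set.mem_univ _, fun u v hu hv =>
      hs u (hxs.subset hu) v (hxs.subset hv)⟩

theorem isNConnected_realization_indepFaces {V : Type*} [Fintype V] {G : SimpleGraph V} {n : ℤ}
    (h : ∀ d : ℕ, (d : ℤ) ≤ n + 1 → BallExtends (Fin d → ℝ) (indepSimplices G Set.univ)) :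
    IsNConnected n (realization (indepFaces G)) := by
  classical
  refine ⟨fun hn => ?_, fun i hi f => ?_⟩
  · obtain ⟨g, -, hg, -⟩ := h 0 (by simpa using by omega) (fun _ => 0) continuousOn_const
      fun x hx => absurd (mem_sphere_pi_iff.1 hx).2 (by simp)
    exact ⟨⟨g 0, mem_indepSimplices_univ_iff.1 (hg (by simp))⟩⟩
  · have hE : BallExtends (EuclideanSpace ℝ (Fin (i + 1))) (indepSimplices G Set.univ) :=
      (h (i + 1) (by push_cast; omega)).of_finrank_eq (by simp)
    let F : EuclideanSpace ℝ (Fin (i + 1)) → V → ℝ := fun x =>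
      if hx : x ∈ Metric.sphere 0 1 then (f ⟨x, hx⟩).1 else 0
    have hF : ∀ x (hx : x ∈ Metric.sphere 0 1), F x = (f ⟨x, hx⟩).1 := fun x hx => dif_pos hx
    obtain ⟨g, hg, hgR, hgF⟩ := hE F (by
      rw [continuousOn_iff_continuous_domRestrict]
      convert continuous_subtype_val.comp f.continuous using 1
      ext1 x
      exact hF x x.2) fun x hx => by
        rw [hF x hx]
        exact mem_indepSimplices_univ_iff.2 (f ⟨x, hx⟩).2
    refine ⟨⟨fun x => ⟨g x, mem_indepSimplices_univ_iff.1 (hgR x.2)⟩, ?_⟩, fun x => ?_⟩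
    · exact (continuousOn_iff_continuous_domRestrict.1 hg).subtype_mk _
    · exact Subtype.ext ((hgF x.2).trans (hF x x.2))

/-- For `n ≥ 1`, `k ≥ 2`, the complex `Ind(L^k_n)` is
`⌊(n-1)/(2k-1) - 1⌋`-connected. -/
theorem indComplex_lineGraph_connectivity {n k : ℕ} (hn : 1 ≤ n) (hk : 2 ≤ k) :
    IsNConnected ⌊((n : ℚ) - 1) / (2 * k - 1) - 1⌋
      (realization (indepFaces (lineGraphL n k))) := by
  refine isNConnected_realization_indepFaces fun d hd => ?_
  have hk' : (2 : ℚ) ≤ k := by exact_mod_cast hk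
  have hd' : (d : ℚ) * (2 * k - 1) ≤ n - 1 := by
    rw [← le_div_iff₀ (by linarith)]
    have h := Int.le_floor.1 (sub_le_iff_le_add.2 hd)
    push_cast at h
    linarith
  have hle : d * (2 * k - 1) + 1 ≤ n := by
    have : ((d * (2 * k - 1) + 1 : ℕ) : ℚ) ≤ n := by
      push_cast [show 1 ≤ 2 * k by omega]
      linarith
    exact_mod_cast this
  convert ballExtends_indepSimplices_lineGraphL (n := n) (k := k) (by omega) d 0 (by omega) using 2
  simp
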